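/- arXiv:1402.0156 — 2 statements merged into one kernel-verified Lean document; each statement's English description precedes it below -/
import Mathlib

section
/- For any nonempty set S ⊆ G and any integer t ≥ 0, the probability, starting from the stationary distribution, that the return time to S exceeds t satisfies Pr_π[T_S^+ > t] ≤ (1 − (1−λ)·π(S))^{t/2}. -/
open MeasureTheory Finset
open scoped ENNReal

namespace HM

variable {G : Type*} [Fintype G] [DecidableEq G]

/-- `P` is a stochastic (transition) matrix. -/
def IsStochastic (P : Matrix G G ℝ) : Prop :=
  (∀ x y, 0 ≤ P x y) ∧ ∀ x, ∑ y, P x y = 1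

/-- Irreducibility: every state reaches every other state. -/
def IsIrreducible (P : Matrix G G ℝ) : Prop :=
  ∀ x y : G, ∃ t : ℕ, 0 < (P ^ t) x y

/-- Aperiodicity: the gcd of return times is `1` at every state. -/
def IsAperiodic (P : Matrix G G ℝ) : Prop :=
  ∀ x : G, ∀ d : ℕ, (∀ t : ℕ, 0 < (P ^ t) x x → d ∣ t) → d = 1

/-- `P` is reversible with respect to the full-support probability vector `pi`. -/
def IsReversible (P : Matrix G G ℝ) (pi : G → ℝ) : Prop :=
  (∀ x, 0 < pi x) ∧ (∑ x, pi x = 1) ∧ ∀ x y, pi x * P x y = pi y * P y x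

variable [MeasurableSpace G]

/-- `μ x` is the law of the Markov chain with transition matrix `P` started at `x`:
all finite-dimensional (cylinder) probabilities are given by products of transition
probabilities. -/
def IsMarkovChain (P : Matrix G G ℝ) (μ : G → Measure (ℕ → G)) : Prop :=
  (∀ x, IsProbabilityMeasure (μ x)) ∧
  ∀ (x : G) (t : ℕ) (w : ℕ → G),
    μ x {ω | ∀ i ≤ t, ω i = w i} =
      ENNReal.ofReal ((if w 0 = x then 1 else 0) * ∏ i ∈ Finset.range t, P (w i) (w (i + 1)))

/-- Hitting time `T_S = inf {t ≥ 0 : X_t ∈ S}`, with value `⊤` if `S` is never hit. -/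
noncomputable def hit (S : Set G) (ω : ℕ → G) : ℕ∞ :=
  sInf ((↑) '' {n : ℕ | ω n ∈ S})

/-- Return time `T_S^+ = inf {t ≥ 1 : X_t ∈ S}`, with value `⊤` if `S` is never hit. -/
noncomputable def hitPlus (S : Set G) (ω : ℕ → G) : ℕ∞ :=
  sInf ((↑) '' {n : ℕ | 1 ≤ n ∧ ω n ∈ S})

/-- The event `X_{T_S} = x` (in particular `T_S < ∞`). -/
def hitsAt (S : Set G) (x : G) : Set (ℕ → G) :=
  {ω | ∃ n : ℕ, hit S ω = (n : ℕ∞) ∧ ω n = x}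

/-- Harmonic measure on `S` from `y`: `h_{y,S}(x) = Pr_y[X_{T_S} = x]`. -/
noncomputable def harm (μ : G → Measure (ℕ → G)) (S : Set G) (y x : G) : ℝ :=
  (μ y (hitsAt S x)).toReal

/-- Harmonic measure on `S` from the stationary distribution:
`h_S(x) = ∑_y π(y) h_{y,S}(x)`. -/
noncomputable def harmStat (pi : G → ℝ) (μ : G → Measure (ℕ → G)) (S : Set G) (x : G) : ℝ :=
  ∑ y, pi y * harm μ S y x

/-- `π(S) = ∑_{x ∈ S} π(x)`. -/
noncomputable def piOf (pi : G → ℝ) (S : Set G) : ℝ :=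
  ∑ x, S.indicator pi x

/-- `λ = max_{j > 1} |λ_j|`, via the variational characterization: the largest absolute
value of the quadratic form of `P` on the orthogonal complement of the constants in
`L²(π)`.  For a reversible chain this equals the largest absolute value of a
non-Perron eigenvalue of `P`. -/
noncomputable def lam (P : Matrix G G ℝ) (pi : G → ℝ) : ℝ :=
  sSup {r : ℝ | ∃ f : G → ℝ, ∑ x, pi x * f x = 0 ∧ ∑ x, pi x * f x ^ 2 = 1 ∧
    r = |∑ x, pi x * (f x * ∑ y, P x y * f y)|}

/-- `π_min = min_x π(x)`. -/
noncomputable def pimin (pi : G → ℝ) : ℝ := ⨅ x, pi x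

/-- `π_max = max_x π(x)`. -/
noncomputable def pimax (pi : G → ℝ) : ℝ := ⨆ x, pi x

/-- `u(P) = min_{x ≠ y} Pr_x[T_y < T_x^+]`. -/
noncomputable def uP (μ : G → Measure (ℕ → G)) : ℝ :=
  sInf {r : ℝ | ∃ x y : G, x ≠ y ∧
    r = (μ x {ω | hit {y} ω < hitPlus {x} ω}).toReal}

/-- `E_x[T_S^+]` (as an extended nonnegative real, then converted to `ℝ`). -/
noncomputable def expHitPlus (μ : G → Measure (ℕ → G)) (S : Set G) (x : G) : ℝ :=
  (∫⁻ ω, (hitPlus S ω : ℝ≥0∞) ∂ μ x).toReal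

/-- The number of distinct states visited strictly before the return time `T_S^+`,
i.e. `|{X_0, X_1, …, X_{T_S^+ − 1}}|`. -/
noncomputable def visited (S : Set G) (ω : ℕ → G) : ℕ :=
  Set.ncard {g : G | ∃ n : ℕ, (n : ℕ∞) < hitPlus S ω ∧ ω n = g}

/-!
Let `u_t(x) = Pr_x[T_S^+ > t]`. Cutting off at `S` and applying `P` are both self-adjoint in
`L²(π)`, so the inner product of `1_{Sᶜ} u_i` and `1_{Sᶜ} u_j` is `Pr_π[T_S^+ > i + j + 1]`. The
pair `(j, j)` gives the squared norm of `g = 1_{Sᶜ} u_j`, and the pair `(j, j + 1)` gives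
`⟪g, P g⟫`. Splitting `g` into its mean and a mean-zero part, and using
`⟪1, g⟫² ≤ (1 - π(S)) ‖g‖²` because `g` vanishes on `S`, gives `⟪g, P g⟫ ≤ r ‖g‖²` with
`r = 1 - (1 - λ) π(S)`. Hence the tail of `T_S^+` contracts by `r` at every step from an odd to an
even time, and by monotonicity this yields `r ^ (t / 2)`.
-/

open RCLike
open scoped Matrix

section WeightedInner

variable {ι : Type*} [Fintype ι] {w : ι → ℝ}

lemma wInner_eq_sum (w f g : ι → ℝ) : ⟪f, g⟫_[ℝ, w] = ∑ x, w x * (f x * g x) := by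
  simp only [wInner, smul_eq_mul, inner_apply, conj_trivial, mul_comm (g _)]

lemma wInner_comm (w f g : ι → ℝ) : ⟪f, g⟫_[ℝ, w] = ⟪g, f⟫_[ℝ, w] := by
  simp only [wInner_eq_sum, mul_comm]

lemma wInner_self_nonneg (hw : 0 ≤ w) (f : ι → ℝ) : 0 ≤ ⟪f, f⟫_[ℝ, w] := by
  rw [wInner_eq_sum]
  exact sum_nonneg fun x _ => mul_nonneg (hw x) (mul_self_nonneg _)

lemma wInner_indicator_left (w f g : ι → ℝ) (s : Set ι) :
    ⟪s.indicator f, g⟫_[ℝ, w] = ⟪f, s.indicator g⟫_[ℝ, w] := by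
  classical simp [wInner_eq_sum, Set.indicator_apply]

lemma wInner_indicator_indicator (w f g : ι → ℝ) (s : Set ι) :
    ⟪s.indicator f, s.indicator g⟫_[ℝ, w] = ⟪s.indicator f, g⟫_[ℝ, w] := by
  rw [← wInner_indicator_left, Set.indicator_indicator, Set.inter_self]

lemma wInner_one_mono (hw : 0 ≤ w) {f g : ι → ℝ} (hfg : f ≤ g) :
    ⟪1, f⟫_[ℝ, w] ≤ ⟪1, g⟫_[ℝ, w] := by
  simp only [wInner_eq_sum, Pi.one_apply, one_mul]
  exact sum_le_sum fun x _ => mul_le_mul_of_nonneg_left (hfg x) (hw x)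

lemma wInner_sq_le (hw : 0 ≤ w) (f g : ι → ℝ) :
    ⟪f, g⟫_[ℝ, w] ^ 2 ≤ ⟪f, f⟫_[ℝ, w] * ⟪g, g⟫_[ℝ, w] := by
  simp only [wInner_eq_sum]
  refine sum_sq_le_sum_mul_sum_of_sq_le_mul _ (fun x _ => mul_nonneg (hw x) (mul_self_nonneg _))
    (fun x _ => mul_nonneg (hw x) (mul_self_nonneg _)) fun x _ => le_of_eq ?_
  ring

lemma wInner_one_indicator_one (w : ι → ℝ) (s : Set ι) :
    ⟪1, s.indicator (1 : ι → ℝ)⟫_[ℝ, w] = piOf w s := by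
  classical
  simp [wInner_eq_sum, piOf, Set.indicator_apply]

lemma wInner_one_indicator_sq_le (hw : 0 ≤ w) (s : Set ι) (f : ι → ℝ) :
    ⟪1, s.indicator f⟫_[ℝ, w] ^ 2 ≤ piOf w s * ⟪s.indicator f, s.indicator f⟫_[ℝ, w] := by
  have h := wInner_sq_le hw (s.indicator 1) (s.indicator f)
  simpa only [wInner_indicator_indicator _ 1, wInner_indicator_left _ 1,
    wInner_one_indicator_one] using h

lemma piOf_nonneg (hw : 0 ≤ w) (s : Set ι) : 0 ≤ piOf w s :=
  sum_nonneg fun x _ => Set.indicator_nonneg (fun y _ => hw y) x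

lemma piOf_compl (hw : ∑ x, w x = 1) (s : Set ι) : piOf w sᶜ = 1 - piOf w s := by
  rw [eq_sub_iff_add_eq', piOf, piOf, ← sum_add_distrib, ← hw]
  exact sum_congr rfl fun x _ => Set.indicator_self_add_compl_apply s w x

end WeightedInner

section Stochastic

variable {ι : Type*} [Fintype ι] {P : Matrix ι ι ℝ} {pi : ι → ℝ}

lemma IsStochastic.mulVec_one (hP : IsStochastic P) : P *ᵥ 1 = 1 := by
  ext x
  simp [Matrix.mulVec, dotProduct, hP.2 x]

lemma IsStochastic.mulVec_nonneg (hP : IsStochastic P) {f : ι → ℝ} (hf : 0 ≤ f) : 0 ≤ P *ᵥ f :=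
  fun x => sum_nonneg fun y _ => mul_nonneg (hP.1 x y) (hf y)

lemma IsStochastic.sq_mulVec_le (hP : IsStochastic P) (f : ι → ℝ) :
    (P *ᵥ f) ^ 2 ≤ P *ᵥ f ^ 2 := by
  intro x
  simpa [wInner_eq_sum, Matrix.mulVec, dotProduct, hP.2 x, sq] using wInner_sq_le (hP.1 x) 1 f

lemma IsReversible.nonneg (hrev : IsReversible P pi) : 0 ≤ pi := fun x => (hrev.1 x).le

lemma IsReversible.wInner_one_one (hrev : IsReversible P pi) : ⟪(1 : ι → ℝ), 1⟫_[ℝ, pi] = 1 := by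
  simp [wInner_eq_sum, hrev.2.1]

lemma IsReversible.wInner_mulVec_comm (hrev : IsReversible P pi) (f g : ι → ℝ) :
    ⟪P *ᵥ f, g⟫_[ℝ, pi] = ⟪f, P *ᵥ g⟫_[ℝ, pi] := by
  simp only [wInner_eq_sum, Matrix.mulVec, dotProduct, mul_sum, sum_mul]
  rw [sum_comm]
  refine sum_congr rfl fun y _ => sum_congr rfl fun x _ => ?_
  linear_combination f y * g x * hrev.2.2 x y

lemma IsReversible.wInner_one_mulVec (hP : IsStochastic P) (hrev : IsReversible P pi)
    (f : ι → ℝ) : ⟪1, P *ᵥ f⟫_[ℝ, pi] = ⟪1, f⟫_[ℝ, pi] := by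
  rw [← hrev.wInner_mulVec_comm, hP.mulVec_one]

lemma IsReversible.wInner_mulVec_self_le (hP : IsStochastic P) (hrev : IsReversible P pi)
    (f : ι → ℝ) : ⟪P *ᵥ f, P *ᵥ f⟫_[ℝ, pi] ≤ ⟪f, f⟫_[ℝ, pi] :=
  calc ⟪P *ᵥ f, P *ᵥ f⟫_[ℝ, pi] = ⟪1, (P *ᵥ f) ^ 2⟫_[ℝ, pi] := by simp [wInner_eq_sum, sq]
    _ ≤ ⟪1, P *ᵥ f ^ 2⟫_[ℝ, pi] := wInner_one_mono hrev.nonneg (hP.sq_mulVec_le f)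
    _ = ⟪f, f⟫_[ℝ, pi] := by rw [hrev.wInner_one_mulVec hP]; simp [wInner_eq_sum, sq]

lemma IsReversible.abs_wInner_mulVec_le (hP : IsStochastic P) (hrev : IsReversible P pi)
    (f : ι → ℝ) : |⟪f, P *ᵥ f⟫_[ℝ, pi]| ≤ ⟪f, f⟫_[ℝ, pi] := by
  have hf := wInner_self_nonneg hrev.nonneg f
  refine abs_le_of_sq_le_sq ?_ hf
  calc ⟪f, P *ᵥ f⟫_[ℝ, pi] ^ 2
      ≤ ⟪f, f⟫_[ℝ, pi] * ⟪P *ᵥ f, P *ᵥ f⟫_[ℝ, pi] := wInner_sq_le hrev.nonneg _ _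
    _ ≤ ⟪f, f⟫_[ℝ, pi] * ⟪f, f⟫_[ℝ, pi] :=
        mul_le_mul_of_nonneg_left (hrev.wInner_mulVec_self_le hP f) hf
    _ = ⟪f, f⟫_[ℝ, pi] ^ 2 := (sq _).symm

end Stochastic

section SpectralBound

variable {ι : Type*} [Fintype ι] {P : Matrix ι ι ℝ} {pi : ι → ℝ} {θ : ℝ}

/-- `θ` is an upper bound for the second largest eigenvalue `λ_2` of `P`, expressed by the
quadratic form of `P` on the mean-zero functions of `L²(π)`. In contrast to `lam`, the negative
eigenvalues of `P` impose no constraint. -/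
def IsSpectralBound (P : Matrix ι ι ℝ) (pi : ι → ℝ) (θ : ℝ) : Prop :=
  ∀ f : ι → ℝ, ⟪1, f⟫_[ℝ, pi] = 0 → ⟪f, P *ᵥ f⟫_[ℝ, pi] ≤ θ * ⟪f, f⟫_[ℝ, pi]

lemma lam_eq_sSup (P : Matrix ι ι ℝ) (pi : ι → ℝ) :
    lam P pi = sSup {r | ∃ f : ι → ℝ, ⟪1, f⟫_[ℝ, pi] = 0 ∧ ⟪f, f⟫_[ℝ, pi] = 1 ∧
      r = |⟪f, P *ᵥ f⟫_[ℝ, pi]|} := by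
  simp only [lam, wInner_eq_sum, Matrix.mulVec, dotProduct, Pi.one_apply, one_mul, sq]

lemma lam_nonneg (P : Matrix ι ι ℝ) (pi : ι → ℝ) : 0 ≤ lam P pi := by
  apply Real.sSup_nonneg
  rintro r ⟨f, -, -, rfl⟩
  exact abs_nonneg _

lemma IsReversible.lam_le_one (hP : IsStochastic P) (hrev : IsReversible P pi) :
    lam P pi ≤ 1 := by
  rw [lam_eq_sSup]
  refine Real.sSup_le ?_ zero_le_one
  rintro r ⟨f, -, hf, rfl⟩
  exact (hrev.abs_wInner_mulVec_le hP f).trans_eq hf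

lemma IsReversible.abs_wInner_mulVec_le_lam (hP : IsStochastic P) (hrev : IsReversible P pi)
    {f : ι → ℝ} (hf₀ : ⟪1, f⟫_[ℝ, pi] = 0) (hf₁ : ⟪f, f⟫_[ℝ, pi] = 1) :
    |⟪f, P *ᵥ f⟫_[ℝ, pi]| ≤ lam P pi := by
  rw [lam_eq_sSup]
  refine le_csSup ⟨1, ?_⟩ ⟨f, hf₀, hf₁, rfl⟩
  rintro r ⟨g, -, hg, rfl⟩
  exact (hrev.abs_wInner_mulVec_le hP g).trans_eq hg

lemma IsReversible.isSpectralBound_lam (hP : IsStochastic P) (hrev : IsReversible P pi) :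
    IsSpectralBound P pi (lam P pi) := by
  intro f hf
  rcases (wInner_self_nonneg hrev.nonneg f).eq_or_lt with hN | hN
  · have h := (le_abs_self _).trans (hrev.abs_wInner_mulVec_le hP f)
    rwa [← hN, mul_zero, hN]
  · set N := ⟪f, f⟫_[ℝ, pi]
    set c := (√N)⁻¹
    have hc : c * c = N⁻¹ := by rw [← mul_inv, Real.mul_self_sqrt hN.le]
    have hmean : ⟪1, c • f⟫_[ℝ, pi] = 0 := by rw [wInner_smul_right, hf, smul_zero]
    have hform (g : ι → ℝ) : ⟪c • f, c • g⟫_[ℝ, pi] = N⁻¹ * ⟪f, g⟫_[ℝ, pi] := by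
      rw [wInner_smul_left, wInner_smul_right, star_trivial, smul_smul, hc, smul_eq_mul]
    have hnorm : ⟪c • f, c • f⟫_[ℝ, pi] = 1 := by rw [hform, inv_mul_cancel₀ hN.ne']
    have h := (le_abs_self _).trans (hrev.abs_wInner_mulVec_le_lam hP hmean hnorm)
    rwa [Matrix.mulVec_smul, hform, inv_mul_le_iff₀ hN, mul_comm] at h

lemma IsSpectralBound.wInner_mulVec_le (hP : IsStochastic P) (hrev : IsReversible P pi)
    (hθ : IsSpectralBound P pi θ) (f : ι → ℝ) :
    ⟪f, P *ᵥ f⟫_[ℝ, pi] ≤ θ * ⟪f, f⟫_[ℝ, pi] + (1 - θ) * ⟪1, f⟫_[ℝ, pi] ^ 2 := by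
  set m := ⟪1, f⟫_[ℝ, pi] with hm
  have hform (g : ι → ℝ) (hg : ⟪1, g⟫_[ℝ, pi] = m) :
      ⟪f - m • 1, g - m • 1⟫_[ℝ, pi] = ⟪f, g⟫_[ℝ, pi] - m ^ 2 := by
    simp only [wInner_sub_left, wInner_sub_right, wInner_smul_left, wInner_smul_right,
      wInner_comm pi f 1, hrev.wInner_one_one, hg, ← hm, star_trivial, smul_eq_mul]
    ring
  have hmean : ⟪1, f - m • 1⟫_[ℝ, pi] = 0 := by
    rw [wInner_sub_right, wInner_smul_right, hrev.wInner_one_one, smul_eq_mul, mul_one, sub_self]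
  have h := hθ _ hmean
  rw [Matrix.mulVec_sub, Matrix.mulVec_smul, hP.mulVec_one, hform f rfl,
    hform _ (hrev.wInner_one_mulVec hP f)] at h
  linarith

lemma IsSpectralBound.wInner_indicator_mulVec_le (hP : IsStochastic P)
    (hrev : IsReversible P pi) (hθ : IsSpectralBound P pi θ) (hθ₁ : θ ≤ 1) (S : Set ι)
    (f : ι → ℝ) :
    ⟪Sᶜ.indicator f, P *ᵥ Sᶜ.indicator f⟫_[ℝ, pi]
      ≤ (1 - (1 - θ) * piOf pi S) * ⟪Sᶜ.indicator f, Sᶜ.indicator f⟫_[ℝ, pi] := by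
  set g := Sᶜ.indicator f
  have hmean : ⟪1, g⟫_[ℝ, pi] ^ 2 ≤ (1 - piOf pi S) * ⟪g, g⟫_[ℝ, pi] :=
    piOf_compl hrev.2.1 S ▸ wInner_one_indicator_sq_le hrev.nonneg Sᶜ f
  calc ⟪g, P *ᵥ g⟫_[ℝ, pi]
      ≤ θ * ⟪g, g⟫_[ℝ, pi] + (1 - θ) * ⟪1, g⟫_[ℝ, pi] ^ 2 := hθ.wInner_mulVec_le hP hrev g
    _ ≤ θ * ⟪g, g⟫_[ℝ, pi] + (1 - θ) * ((1 - piOf pi S) * ⟪g, g⟫_[ℝ, pi]) := by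
        gcongr
    _ = (1 - (1 - θ) * piOf pi S) * ⟪g, g⟫_[ℝ, pi] := by ring

end SpectralBound

lemma le_rpow_half_of_antitone {p : ℕ → ℝ} {r : ℝ} (hp : Antitone p) (hr₀ : 0 ≤ r) (hr₁ : r ≤ 1)
    (h₀ : p 0 ≤ 1) (h₁ : p 1 ≤ r) (hstep : ∀ j, p (2 * j + 2) ≤ r * p (2 * j + 1)) (t : ℕ) :
    p t ≤ r ^ ((t : ℝ) / 2) := by
  have hodd (j : ℕ) : p (2 * j + 1) ≤ r ^ (j + 1) := by
    induction j with
    | zero => simpa using h₁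
    | succ j ih =>
      calc p (2 * j + 2 + 1) ≤ p (2 * j + 2) := hp (Nat.le_succ _)
        _ ≤ r * p (2 * j + 1) := hstep j
        _ ≤ r * r ^ (j + 1) := mul_le_mul_of_nonneg_left ih hr₀
        _ = r ^ (j + 1 + 1) := (pow_succ' r _).symm
  cases t with
  | zero => simpa using h₀
  | succ t =>
    have hexp : ((t + 1 : ℕ) : ℝ) / 2 ≤ ((t / 2 + 1 : ℕ) : ℝ) := by
      rw [div_le_iff₀ two_pos]
      exact_mod_cast (by omega : t + 1 ≤ (t / 2 + 1) * 2)
    calc p (t + 1) ≤ p (2 * (t / 2) + 1) := hp (by omega)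
      _ ≤ r ^ (t / 2 + 1) := hodd _
      _ = r ^ ((t / 2 + 1 : ℕ) : ℝ) := (Real.rpow_natCast r _).symm
      _ ≤ r ^ (((t + 1 : ℕ) : ℝ) / 2) :=
        Real.rpow_le_rpow_of_exponent_ge' hr₀ hr₁ (by positivity) hexp

section Survival

variable {ι : Type*} [Fintype ι] {P : Matrix ι ι ℝ} {pi : ι → ℝ} {θ : ℝ}

/-- `survival P S t x` is the probability `Pr_x[T_S^+ > t] = Pr_x[X_1, …, X_t ∉ S]`, defined
algebraically from `P` by conditioning on the first step. -/
noncomputable def survival (P : Matrix ι ι ℝ) (S : Set ι) : ℕ → ι → ℝ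
  | 0 => 1
  | t + 1 => P *ᵥ Sᶜ.indicator (survival P S t)

lemma survival_nonneg (hP : IsStochastic P) (S : Set ι) (t : ℕ) : 0 ≤ survival P S t := by
  induction t with
  | zero => exact zero_le_one
  | succ t ih => exact hP.mulVec_nonneg (Set.indicator_nonneg fun x _ => ih x)

lemma wInner_one_survival_succ (hP : IsStochastic P) (hrev : IsReversible P pi) (S : Set ι)
    (t : ℕ) : ⟪1, survival P S (t + 1)⟫_[ℝ, pi] = ⟪1, Sᶜ.indicator (survival P S t)⟫_[ℝ, pi] :=
  hrev.wInner_one_mulVec hP _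

lemma wInner_one_survival_zero (hrev : IsReversible P pi) (S : Set ι) :
    ⟪1, survival P S 0⟫_[ℝ, pi] = 1 :=
  hrev.wInner_one_one

lemma wInner_one_survival_one (hP : IsStochastic P) (hrev : IsReversible P pi) (S : Set ι) :
    ⟪1, survival P S 1⟫_[ℝ, pi] = 1 - piOf pi S := by
  rw [wInner_one_survival_succ hP hrev, ← piOf_compl hrev.2.1]
  exact wInner_one_indicator_one pi Sᶜ

lemma antitone_wInner_one_survival (hP : IsStochastic P) (hrev : IsReversible P pi) (S : Set ι) :
    Antitone fun t => ⟪1, survival P S t⟫_[ℝ, pi] :=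
  antitone_nat_of_succ_le fun t => by
    rw [wInner_one_survival_succ hP hrev]
    exact wInner_one_mono hrev.nonneg
      (Set.indicator_le_self' fun x _ => survival_nonneg hP S t x)

lemma wInner_indicator_survival (hP : IsStochastic P) (hrev : IsReversible P pi) (S : Set ι)
    (i j : ℕ) :
    ⟪Sᶜ.indicator (survival P S i), survival P S j⟫_[ℝ, pi]
      = ⟪1, survival P S (i + j + 1)⟫_[ℝ, pi] := by
  induction i generalizing j with
  | zero => rw [zero_add, wInner_one_survival_succ hP hrev, wInner_indicator_left]; rfl
  | succ i ih =>
    calc ⟪Sᶜ.indicator (survival P S (i + 1)), survival P S j⟫_[ℝ, pi]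
        = ⟪P *ᵥ Sᶜ.indicator (survival P S i), Sᶜ.indicator (survival P S j)⟫_[ℝ, pi] :=
          wInner_indicator_left ..
      _ = ⟪Sᶜ.indicator (survival P S i), survival P S (j + 1)⟫_[ℝ, pi] :=
          hrev.wInner_mulVec_comm _ _
      _ = ⟪1, survival P S (i + 1 + j + 1)⟫_[ℝ, pi] := by rw [ih, Nat.add_right_comm i 1 j]; rfl

lemma IsSpectralBound.wInner_one_survival_even_le (hP : IsStochastic P)
    (hrev : IsReversible P pi) (hθ : IsSpectralBound P pi θ) (hθ₁ : θ ≤ 1) (S : Set ι) (j : ℕ) :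
    ⟪1, survival P S (2 * j + 2)⟫_[ℝ, pi]
      ≤ (1 - (1 - θ) * piOf pi S) * ⟪1, survival P S (2 * j + 1)⟫_[ℝ, pi] := by
  have h := hθ.wInner_indicator_mulVec_le hP hrev hθ₁ S (survival P S j)
  rw [wInner_indicator_indicator] at h
  rw [two_mul, ← wInner_indicator_survival hP hrev S j j]
  exact (wInner_indicator_survival hP hrev S j (j + 1)).symm.trans_le h

lemma IsSpectralBound.wInner_one_survival_le (hP : IsStochastic P) (hrev : IsReversible P pi)
    (hθ : IsSpectralBound P pi θ) (hθ₀ : 0 ≤ θ) (hθ₁ : θ ≤ 1) (S : Set ι) (t : ℕ) :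
    ⟪1, survival P S t⟫_[ℝ, pi] ≤ (1 - (1 - θ) * piOf pi S) ^ ((t : ℝ) / 2) := by
  have hS₀ : 0 ≤ piOf pi S := piOf_nonneg hrev.nonneg S
  have hS₁ : 0 ≤ 1 - piOf pi S := piOf_compl hrev.2.1 S ▸ piOf_nonneg hrev.nonneg Sᶜ
  have hr : 1 - piOf pi S ≤ 1 - (1 - θ) * piOf pi S := by linarith [mul_nonneg hθ₀ hS₀]
  exact le_rpow_half_of_antitone (antitone_wInner_one_survival hP hrev S) (hS₁.trans hr)
    (sub_le_self _ (mul_nonneg (sub_nonneg.2 hθ₁) hS₀)) (wInner_one_survival_zero hrev S).le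
    ((wInner_one_survival_one hP hrev S).trans_le hr)
    (hθ.wInner_one_survival_even_le hP hrev hθ₁ S) t

end Survival

section PathAvoid

variable {α : Type*}

lemma natCast_lt_hitPlus_iff {S : Set α} {ω : ℕ → α} {t : ℕ} :
    (t : ℕ∞) < hitPlus S ω ↔ ∀ i ∈ Set.Ioc 0 t, ω i ∉ S := by
  rw [← ENat.add_one_le_iff (ENat.natCast_ne_top t), hitPlus, le_sInf_iff, Set.forall_mem_image]
  norm_cast
  simp only [Set.mem_ofPred_eq, Set.mem_Ioc]
  grind

/-- The event that the trajectory follows `w` up to time `k` and then stays outside `S` at the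
`t` times `k + 1, …, k + t`. Only the values of `w` up to `k` matter. -/
def pathAvoid (S : Set α) (w : ℕ → α) (k t : ℕ) : Set (ℕ → α) :=
  {ω | (∀ i ≤ k, ω i = w i) ∧ ∀ i ∈ Set.Ioc k (k + t), ω i ∉ S}

lemma pathAvoid_succ (S : Set α) (w : ℕ → α) (k t : ℕ) :
    pathAvoid S w k (t + 1) =
      ⋃ z ∉ S, pathAvoid S (Function.update w (k + 1) z) (k + 1) t := by
  ext ω
  simp only [pathAvoid, Set.mem_ofPred_eq, Set.mem_iUnion, Set.mem_Ioc, exists_prop]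
  constructor
  · rintro ⟨hpath, havoid⟩
    refine ⟨ω (k + 1), havoid _ (by omega), fun i hi => ?_, fun i hi => havoid i (by omega)⟩
    grind [Function.update_apply]
  · rintro ⟨z, hz, hpath, havoid⟩
    have hnext : ω (k + 1) = z := by simpa using hpath (k + 1) le_rfl
    grind [Function.update_apply]

lemma setOf_lt_hitPlus_eq (S : Set α) (t : ℕ) :
    {ω | (t : ℕ∞) < hitPlus S ω} = ⋃ z, pathAvoid S (fun _ => z) 0 t := by
  ext ω
  simp [pathAvoid, natCast_lt_hitPlus_iff]

end PathAvoid

section MarkovChain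

variable {α : Type*} [DecidableEq α] [MeasurableSpace α] {P : Matrix α α ℝ}
  {μ : α → Measure (ℕ → α)}

lemma IsMarkovChain.measure_start_eq (hμ : IsMarkovChain P μ) (x z : α) :
    μ x {ω | ω 0 = z} = if z = x then 1 else 0 := by
  simpa [apply_ite ENNReal.ofReal] using hμ.2 x 0 fun _ => z

lemma IsMarkovChain.measure_path_update (hP : ∀ x y, 0 ≤ P x y) (hμ : IsMarkovChain P μ)
    (x : α) (k : ℕ) (w : ℕ → α) (z : α) :
    μ x {ω | ∀ i ≤ k + 1, ω i = Function.update w (k + 1) z i}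
      = μ x {ω | ∀ i ≤ k, ω i = w i} * ENNReal.ofReal (P (w k) z) := by
  have hw {i : ℕ} (hi : i ≤ k) : Function.update w (k + 1) z i = w i :=
    Function.update_of_ne (by omega) _ _
  have hprod :
      ∏ i ∈ range k, P (Function.update w (k + 1) z i) (Function.update w (k + 1) z (i + 1))
        = ∏ i ∈ range k, P (w i) (w (i + 1)) :=
    prod_congr rfl fun i hi => by rw [hw (mem_range.1 hi).le, hw (mem_range.1 hi)]
  rw [hμ.2, hμ.2, prod_range_succ, hprod, hw k.zero_le, hw le_rfl, Function.update_self,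
    ← mul_assoc, ENNReal.ofReal_mul' (hP _ _)]

variable [Fintype α]

lemma IsMarkovChain.measure_pathAvoid_le (hP : IsStochastic P) (hμ : IsMarkovChain P μ)
    (S : Set α) (x : α) (w : ℕ → α) (k t : ℕ) :
    μ x (pathAvoid S w k t)
      ≤ μ x {ω | ∀ i ≤ k, ω i = w i} * ENNReal.ofReal (survival P S t (w k)) := by
  classical
  induction t generalizing w k with
  | zero => simp [pathAvoid, survival]
  | succ t ih =>
    set c := μ x {ω | ∀ i ≤ k, ω i = w i}
    have hstep (z : α) : μ x (pathAvoid S (Function.update w (k + 1) z) (k + 1) t)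
        ≤ c * ENNReal.ofReal (P (w k) z * survival P S t z) := by
      refine (ih _ _).trans_eq ?_
      rw [hμ.measure_path_update hP.1, Function.update_self, mul_assoc,
        ← ENNReal.ofReal_mul (hP.1 _ _)]
    calc μ x (pathAvoid S w k (t + 1))
        ≤ ∑ z with z ∉ S, μ x (pathAvoid S (Function.update w (k + 1) z) (k + 1) t) := by
          simpa [pathAvoid_succ] using measure_biUnion_finset_le (μ := μ x) {z | z ∉ S} _
      _ ≤ ∑ z with z ∉ S, c * ENNReal.ofReal (P (w k) z * survival P S t z) :=
          sum_le_sum fun z _ => hstep z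
      _ = c * ENNReal.ofReal (∑ z with z ∉ S, P (w k) z * survival P S t z) := by
          rw [← mul_sum, ENNReal.ofReal_sum_of_nonneg fun z _ =>
            mul_nonneg (hP.1 _ _) (survival_nonneg hP S t z)]
      _ = c * ENNReal.ofReal (survival P S (t + 1) (w k)) := by
          simp [survival, Matrix.mulVec, dotProduct, sum_filter, Set.indicator_apply]

lemma IsMarkovChain.measure_lt_hitPlus_le (hP : IsStochastic P) (hμ : IsMarkovChain P μ)
    (S : Set α) (x : α) (t : ℕ) :
    (μ x {ω | (t : ℕ∞) < hitPlus S ω}).toReal ≤ survival P S t x := by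
  refine ENNReal.toReal_le_of_le_ofReal (survival_nonneg hP S t x) ?_
  calc μ x {ω | (t : ℕ∞) < hitPlus S ω}
      = μ x (⋃ z, pathAvoid S (fun _ => z) 0 t) := by rw [setOf_lt_hitPlus_eq]
    _ ≤ ∑ z, μ x (pathAvoid S (fun _ => z) 0 t) := measure_iUnion_fintype_le _ _
    _ ≤ ∑ z, μ x {ω | ∀ i ≤ 0, ω i = z} * ENNReal.ofReal (survival P S t z) :=
        sum_le_sum fun z _ => hμ.measure_pathAvoid_le hP S x (fun _ => z) 0 t
    _ = ENNReal.ofReal (survival P S t x) := by simp [hμ.measure_start_eq]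

end MarkovChain

theorem stmt0_general {α : Type*} [Fintype α] [DecidableEq α] [MeasurableSpace α]
    {P : Matrix α α ℝ} {pi : α → ℝ} {μ : α → Measure (ℕ → α)}
    (hP : IsStochastic P) (hrev : IsReversible P pi) (hμ : IsMarkovChain P μ)
    {θ : ℝ} (hθ : IsSpectralBound P pi θ) (hθ₀ : 0 ≤ θ) (hθ₁ : θ ≤ 1) (S : Set α) (t : ℕ) :
    ∑ y, pi y * (μ y {ω | (t : ℕ∞) < hitPlus S ω}).toReal
      ≤ (1 - (1 - θ) * piOf pi S) ^ ((t : ℝ) / 2) :=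
  calc ∑ y, pi y * (μ y {ω | (t : ℕ∞) < hitPlus S ω}).toReal
      ≤ ∑ y, pi y * survival P S t y :=
        sum_le_sum fun y _ =>
          mul_le_mul_of_nonneg_left (hμ.measure_lt_hitPlus_le hP S y t) (hrev.nonneg y)
    _ = ⟪1, survival P S t⟫_[ℝ, pi] := by simp [wInner_eq_sum]
    _ ≤ (1 - (1 - θ) * piOf pi S) ^ ((t : ℝ) / 2) := hθ.wInner_one_survival_le hP hrev hθ₀ hθ₁ S t

/-- For any nonempty `S ⊆ G` and any `t ≥ 0`,
`Pr_π[T_S^+ > t] ≤ (1 − (1−λ)·π(S))^(t/2)`. -/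
theorem stmt0 {G : Type*} [Fintype G] [DecidableEq G] [MeasurableSpace G] [MeasurableSingletonClass G]
    (P : Matrix G G ℝ) (pi : G → ℝ) (μ : G → Measure (ℕ → G))
    (hP : IsStochastic P) (hirr : IsIrreducible P) (hap : IsAperiodic P)
    (hrev : IsReversible P pi) (hμ : IsMarkovChain P μ)
    (S : Set G) (hS : S.Nonempty) (t : ℕ) :
    ∑ y, pi y * (μ y {ω | (t : ℕ∞) < hitPlus S ω}).toReal
      ≤ (1 - (1 - lam P pi) * piOf pi S) ^ ((t : ℝ) / 2) :=
  stmt0_general hP hrev hμ (hrev.isSpectralBound_lam hP) (lam_nonneg P pi) (hrev.lam_le_one hP) S t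

end HM
end

section
/- For any nonempty set S ⊆ G, any x ∈ S and any y ∈ G \ S, the path-reversal identity π(y)·Pr_y[X_{T_S} = x, T_S < T_y^+] = π(x)·Pr_x[T_y < T_S^+] holds. -/
open MeasureTheory Finset
open scoped ENNReal

namespace HM

variable {G : Type*} [Fintype G] [DecidableEq G]

variable [MeasurableSpace G]

/-!
Both events split according to the time `n` at which the target is hit, and the `n`-th pieces
consist of the `n`-step paths from `y` to `x`, respectively from `x` to `y`, whose interior avoids
`S ∪ {y}`. Reversing time exchanges these two sets of paths, and by detailed balance it turns
`π(y)` times the probability of a path into `π(x)` times the probability of the reversed path.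
-/

section HittingTimes

variable {α : Type*} {A B : Set α} {ω : ℕ → α} {n : ℕ}

theorem coe_le_hit_iff : (n : ℕ∞) ≤ hit A ω ↔ ∀ i < n, ω i ∉ A := by
  simp only [hit, le_sInf_iff, Set.forall_mem_image, Set.mem_ofPred_eq, Nat.cast_le]
  exact forall_congr' fun i => by rw [← not_lt, imp_not_comm]

theorem hit_eq_coe_iff : hit A ω = n ↔ ω n ∈ A ∧ ∀ i < n, ω i ∉ A := by
  rw [eq_comm, eq_iff_le_not_lt, ← ENat.add_one_le_iff (ENat.natCast_ne_top n), ← Nat.cast_add_one,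
    coe_le_hit_iff, coe_le_hit_iff, Nat.forall_lt_succ_right]
  tauto

theorem coe_lt_hitPlus_iff : (n : ℕ∞) < hitPlus B ω ↔ ∀ i, 0 < i → i ≤ n → ω i ∉ B := by
  rw [← ENat.add_one_le_iff (ENat.natCast_ne_top n), ← Nat.cast_add_one]
  simp only [hitPlus, le_sInf_iff, Set.forall_mem_image, Set.mem_ofPred_eq, Nat.cast_le, and_imp]
  refine forall_congr' fun i => imp_congr_right fun _ => ?_
  rw [Nat.succ_le_iff, ← not_le, imp_not_comm]

/-- The event `X_{T_A} = b, T_A < T_B^+` (in particular `T_A < ∞`). -/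
def hitsAtBefore (A B : Set α) (b : α) : Set (ℕ → α) :=
  {ω | ∃ n : ℕ, hit A ω = (n : ℕ∞) ∧ ω n = b ∧ (n : ℕ∞) < hitPlus B ω}

theorem hitsAtBefore_singleton (y : α) (B : Set α) :
    hitsAtBefore {y} B y = {ω | hit {y} ω < hitPlus B ω} := by
  ext ω
  constructor
  · rintro ⟨n, hn, -, hlt⟩
    exact hn.trans_lt hlt
  · intro hlt
    obtain ⟨n, hn⟩ := ENat.ne_top_iff_exists.1 hlt.ne_top
    exact ⟨n, hn.symm, (hit_eq_coe_iff.1 hn.symm).1, hn.trans_lt hlt⟩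

end HittingTimes

section Paths

variable {α : Type*}

/-- The segment `(ω 0, …, ω n)` formed by the first `n` steps of a trajectory, indexed
by `Fin (n + 1)` so that time can be reversed with `Fin.rev`. -/
def initialSegment (n : ℕ) (ω : ℕ → α) : Fin (n + 1) → α := fun i => ω i

theorem measurable_initialSegment [MeasurableSpace α] (n : ℕ) :
    Measurable (initialSegment n : (ℕ → α) → Fin (n + 1) → α) :=
  measurable_pi_lambda _ fun i => measurable_pi_apply (i : ℕ)

/-- The product of the entries of `P` along the `n` steps of a path. -/
def pathWeight {R : Type*} [CommMonoid R] (P : Matrix α α R) {n : ℕ} (p : Fin (n + 1) → α) : R :=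
  ∏ i : Fin n, P (p i.castSucc) (p i.succ)

theorem pathWeight_comp_rev {R : Type*} [CommMonoid R] (P : Matrix α α R) {n : ℕ}
    (p : Fin (n + 1) → α) :
    pathWeight P (p ∘ Fin.rev) = ∏ i : Fin n, P (p i.succ) (p i.castSucc) := by
  rw [pathWeight, ← Equiv.prod_comp Fin.revPerm]
  simp [Fin.rev_castSucc, Fin.rev_succ]

/-- The detailed balance equations for the weights `pi`, which express that a chain with transition
matrix `P` is reversible; `pi` need not be normalized. -/
def DetailedBalance {R : Type*} [Mul R] (P : Matrix α α R) (pi : α → R) : Prop :=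
  ∀ a b, pi a * P a b = pi b * P b a

theorem DetailedBalance.mul_pathWeight {R : Type*} [CommMonoid R] {P : Matrix α α R} {pi : α → R}
    (h : DetailedBalance P pi) {n : ℕ} (p : Fin (n + 1) → α) :
    pi (p 0) * pathWeight P p = pi (p (Fin.last n)) * pathWeight P (p ∘ Fin.rev) := by
  rw [pathWeight_comp_rev, pathWeight]
  induction n with
  | zero => simp
  | succ n ih =>
    have balance := h (p (Fin.last n).castSucc) (p (Fin.last n).succ)
    have initial := ih (fun i => p i.castSucc)
    simp only [Fin.castSucc_zero] at initial
    simp only [Fin.prod_univ_castSucc, Fin.succ_castSucc, ← Fin.succ_last]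
    rw [← mul_assoc, initial, mul_right_comm, balance, mul_assoc, mul_comm (P _ _)]

/-- The `n`-step paths from `a` to `b` whose interior avoids `T`; the endpoints may lie in `T`. -/
def bridge (T : Set α) (n : ℕ) (a b : α) : Set (Fin (n + 1) → α) :=
  {p | p 0 = a ∧ p (Fin.last n) = b ∧ ∀ i, 0 < i → i < Fin.last n → p i ∉ T}

theorem comp_rev_mem_bridge {T : Set α} {n : ℕ} {a b : α} {p : Fin (n + 1) → α}
    (hp : p ∈ bridge T n a b) : p ∘ Fin.rev ∈ bridge T n b a := by
  obtain ⟨start, finish, interior⟩ := hp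
  refine ⟨by simpa using finish, by simpa using start, fun i hi hl => interior _ ?_ ?_⟩
  · rwa [Fin.lt_rev_iff, Fin.rev_zero]
  · rwa [Fin.rev_lt_iff, Fin.rev_last]

/-- Time reversal as a bijection between the paths from `a` to `b` and those from `b` to `a`. -/
def bridgeRevEquiv (T : Set α) (n : ℕ) (a b : α) : bridge T n a b ≃ bridge T n b a where
  toFun p := ⟨p.1 ∘ Fin.rev, comp_rev_mem_bridge p.2⟩
  invFun p := ⟨p.1 ∘ Fin.rev, comp_rev_mem_bridge p.2⟩
  left_inv p := by ext; simp
  right_inv p := by ext; simp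

theorem initialSegment_mem_bridge_iff {T : Set α} {n : ℕ} {a b : α} {ω : ℕ → α} :
    initialSegment n ω ∈ bridge T n a b ↔
      ω 0 = a ∧ ω n = b ∧ ∀ i, 0 < i → i < n → ω i ∉ T := by
  refine and_congr_right fun _ => and_congr_right fun _ => ⟨fun h i hi hin => ?_, ?_⟩
  · exact h ⟨i, hin.trans n.lt_succ_self⟩ hi hin
  · exact fun h i hi hin => h i hi hin

theorem initialSegment_mem_bridge_union_iff {A B : Set α} {a b : α} (ha : a ∉ A) (hb : b ∈ A \ B)
    {n : ℕ} {ω : ℕ → α} :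
    initialSegment n ω ∈ bridge (A ∪ B) n a b ↔
      ω 0 = a ∧ hit A ω = n ∧ ω n = b ∧ n < hitPlus B ω := by
  rw [initialSegment_mem_bridge_iff, hit_eq_coe_iff, coe_lt_hitPlus_iff]
  constructor
  · rintro ⟨rfl, rfl, avoid⟩
    refine ⟨rfl, ⟨hb.1, fun i hi => ?_⟩, rfl, fun i hi hin => ?_⟩
    · rcases i.eq_zero_or_pos with rfl | hpos
      · exact ha
      · exact fun hA => avoid i hpos hi (Or.inl hA)
    · rcases hin.eq_or_lt with rfl | hlt
      · exact hb.2
      · exact fun hB => avoid i hi hlt (Or.inr hB)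
  · rintro ⟨h0, ⟨-, avoidA⟩, hn, avoidB⟩
    exact ⟨h0, hn, fun i hi hin h => h.elim (avoidA i hin) (avoidB i hi hin.le)⟩

end Paths

namespace IsMarkovChain

variable {α : Type*} [DecidableEq α] [MeasurableSpace α] {P : Matrix α α ℝ}
  {μ : α → Measure (ℕ → α)}

theorem measure_preimage_initialSegment_singleton (hμ : IsMarkovChain P μ) {n : ℕ}
    (p : Fin (n + 1) → α) :
    μ (p 0) (initialSegment n ⁻¹' {p}) = ENNReal.ofReal (pathWeight P p) := by
  set w : ℕ → α := fun i => p (Fin.ofNat (n + 1) i)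
  have w_coe (i : Fin (n + 1)) : w i = p i := congrArg p (Fin.ofNat_val_eq_self i)
  have cylinder : initialSegment n ⁻¹' {p} = {ω | ∀ i ≤ n, ω i = w i} := by
    ext ω
    simp only [Set.mem_preimage, Set.mem_singleton_iff, funext_iff, Set.mem_ofPred_eq,
      initialSegment, Fin.forall_iff, Nat.lt_succ_iff]
    exact forall₂_congr fun i hi => by rw [← w_coe]
  have weight : ∏ i ∈ range n, P (w i) (w (i + 1)) = pathWeight P p := by
    rw [prod_range, pathWeight]
    exact prod_congr rfl fun i _ => congrArg₂ P (w_coe i.castSucc) (w_coe i.succ)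
  rw [cylinder, hμ.2, weight, if_pos (show w 0 = p 0 from w_coe 0), one_mul]

variable [MeasurableSingletonClass α]

theorem ae_apply_zero_eq (hμ : IsMarkovChain P μ) (a : α) : ∀ᵐ ω ∂μ a, ω 0 = a := by
  have := hμ.1 a
  have meas : MeasurableSet ((fun ω : ℕ → α => ω 0) ⁻¹' {a}) :=
    measurable_pi_apply 0 (measurableSet_singleton a)
  have start : μ a {ω | ω 0 = a} = 1 := by simpa using hμ.2 a 0 fun _ => a
  exact (mem_ae_iff_prob_eq_one meas).2 start

variable [Countable α]

theorem measure_preimage_initialSegment (hμ : IsMarkovChain P μ) {n : ℕ} {a : α}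
    {A : Set (Fin (n + 1) → α)} (hA : ∀ p ∈ A, p 0 = a) :
    μ a (initialSegment n ⁻¹' A) = ∑' p : A, ENNReal.ofReal (pathWeight P p.1) := by
  rw [← tsum_measure_preimage_singleton (Set.to_countable _) fun p _ =>
    measurable_initialSegment n (measurableSet_singleton p)]
  refine tsum_congr fun p => ?_
  rw [← hμ.measure_preimage_initialSegment_singleton, hA p p.2]

theorem mul_measure_bridge_comm (hμ : IsMarkovChain P μ) {pi : α → ℝ} (hpi : 0 ≤ pi)
    (hbal : DetailedBalance P pi) (T : Set α) (n : ℕ) (a b : α) :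
    ENNReal.ofReal (pi a) * μ a (initialSegment n ⁻¹' bridge T n a b) =
      ENNReal.ofReal (pi b) * μ b (initialSegment n ⁻¹' bridge T n b a) := by
  rw [hμ.measure_preimage_initialSegment fun _ hp => hp.1,
    hμ.measure_preimage_initialSegment fun _ hp => hp.1,
    ← (bridgeRevEquiv T n a b).tsum_eq, ← ENNReal.tsum_mul_left, ← ENNReal.tsum_mul_left]
  refine tsum_congr ?_
  rintro ⟨p, rfl, rfl, -⟩
  rw [← ENNReal.ofReal_mul (hpi _), ← ENNReal.ofReal_mul (hpi _)]
  exact congrArg ENNReal.ofReal (hbal.mul_pathWeight p)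

theorem measure_hitsAtBefore (hμ : IsMarkovChain P μ) {A B : Set α} {a b : α} (ha : a ∉ A)
    (hb : b ∈ A \ B) :
    μ a (hitsAtBefore A B b) = ∑' n, μ a (initialSegment n ⁻¹' bridge (A ∪ B) n a b) := by
  have bridge_iff {n : ℕ} {ω : ℕ → α} :=
    initialSegment_mem_bridge_union_iff ha hb (n := n) (ω := ω)
  have decomposition : hitsAtBefore A B b =ᵐ[μ a]
      ⋃ n, initialSegment n ⁻¹' bridge (A ∪ B) n a b := by
    filter_upwards [hμ.ae_apply_zero_eq a] with ω h0
    refine propext (Iff.trans ?_ Set.mem_iUnion.symm)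
    exact exists_congr fun n => (bridge_iff.trans (and_iff_right h0)).symm
  rw [measure_congr decomposition, measure_iUnion]
  · intro m n hmn
    refine Set.disjoint_left.2 fun ω hm hn => hmn ?_
    exact_mod_cast (bridge_iff.1 hm).2.1.symm.trans (bridge_iff.1 hn).2.1
  · exact fun n => measurable_initialSegment n (Set.to_countable _).measurableSet

end IsMarkovChain

theorem stmt3_general {α : Type*} [Countable α] [DecidableEq α] [MeasurableSpace α]
    [MeasurableSingletonClass α] {P : Matrix α α ℝ} {pi : α → ℝ} {μ : α → Measure (ℕ → α)}
    (hpi : 0 ≤ pi) (hbal : DetailedBalance P pi) (hμ : IsMarkovChain P μ)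
    {A B : Set α} {a b : α} (ha : a ∈ B \ A) (hb : b ∈ A \ B) :
    pi a * (μ a (hitsAtBefore A B b)).toReal = pi b * (μ b (hitsAtBefore B A a)).toReal := by
  have key : ENNReal.ofReal (pi a) * μ a (hitsAtBefore A B b) =
      ENNReal.ofReal (pi b) * μ b (hitsAtBefore B A a) := by
    rw [hμ.measure_hitsAtBefore ha.2 hb, hμ.measure_hitsAtBefore hb.2 ha,
      ← ENNReal.tsum_mul_left, ← ENNReal.tsum_mul_left, Set.union_comm B A]
    exact tsum_congr fun n => hμ.mul_measure_bridge_comm hpi hbal (A ∪ B) n a b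
  simpa [ENNReal.toReal_mul, ENNReal.toReal_ofReal (hpi a), ENNReal.toReal_ofReal (hpi b)] using
    congrArg ENNReal.toReal key

/-- Path-reversal identity: for `x ∈ S` and `y ∉ S`,
`π(y)·Pr_y[X_{T_S} = x, T_S < T_y^+] = π(x)·Pr_x[T_y < T_S^+]`. -/
theorem stmt3 {G : Type*} [Fintype G] [DecidableEq G] [MeasurableSpace G] [MeasurableSingletonClass G]
    (P : Matrix G G ℝ) (pi : G → ℝ) (μ : G → Measure (ℕ → G))
    (hP : IsStochastic P) (hirr : IsIrreducible P) (hap : IsAperiodic P)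
    (hrev : IsReversible P pi) (hμ : IsMarkovChain P μ)
    (S : Set G) (hS : S.Nonempty) (x : G) (hx : x ∈ S) (y : G) (hy : y ∉ S) :
    pi y * (μ y {ω | ∃ n : ℕ, hit S ω = (n : ℕ∞) ∧ ω n = x ∧
        (n : ℕ∞) < hitPlus {y} ω}).toReal
      = pi x * (μ x {ω | hit {y} ω < hitPlus S ω}).toReal := by
  have hyx : x ∉ ({y} : Set G) := fun h => hy (h ▸ hx)
  rw [← hitsAtBefore_singleton]
  exact stmt3_general (fun z => (hrev.1 z).le) hrev.2.2 hμ ⟨rfl, hy⟩ ⟨hx, hyx⟩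

end HM
end
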